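/- Spatio-temporal energy estimate for the state error with model-error forcing (inequality (eq11_w)). Suppose e_y^0,…,e_y^K ∈ Y with e_y^0 = 0 and e_u^1,…,e_u^K ∈ U, together with linear functionals r̃_y^1,…,r̃_y^K on Y, satisfy m(e_y^k − e_y^{k−1}, φ) + τ a(e_y^k, φ) = τ r̃_y^k(φ) + τ b(e_u^k, φ) for all φ ∈ Y and k = 1,…,K. Then τ Σ_{k=1}^K ‖e_y^k‖_Y² ≤ (2τ/α_LB²) Σ_{k=1}^K ‖r̃_y^k‖_{Y'}² + 2 (γ_b/α_LB)² · τ Σ_{k=1}^K ‖e_u^k‖_U². -/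

import Mathlib

set_option autoImplicit false

open Finset RealInnerProductSpace

/-- Dual norm of a functional `r` over the nonzero elements of `S`,
with respect to the norm function `nrm`. -/
noncomputable def dualNorm {Y : Type*} [Zero Y] (nrm : Y → ℝ) (S : Set Y) (r : Y → ℝ) : ℝ :=
  sSup {x : ℝ | ∃ v ∈ S, v ≠ 0 ∧ x = r v / nrm v}

/-!
Testing the `k`-th equation with `e_y^k` and using `‖v‖² - ‖u‖² ≤ 2⟪v - u, v⟫` turns the difference
quotient into a telescoping energy term, while by Young's inequality half of the coercive term
absorbs the forcing. Only then are the two parts of the forcing separated, by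
`(p + q)² ≤ 2(p² + q²)`; this is where both factors `2` of the estimate come from.
-/

theorem apply_div_norm_le_opNorm {Y : Type*} [SeminormedAddCommGroup Y] [NormedSpace ℝ Y]
    (r : Y →L[ℝ] ℝ) (v : Y) : r v / ‖v‖ ≤ ‖r‖ :=
  div_le_of_le_mul₀ (norm_nonneg v) (norm_nonneg r) ((le_abs_self _).trans (r.le_opNorm v))

section DualNorm

variable {Y : Type*} [NormedAddCommGroup Y] [NormedSpace ℝ Y]

theorem apply_le_dualNorm_mul_norm (r : Y →L[ℝ] ℝ) (v : Y) :
    r v ≤ dualNorm (fun v : Y => ‖v‖) Set.univ r * ‖v‖ := by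
  rcases eq_or_ne v 0 with rfl | hv
  · simp
  rw [← div_le_iff₀ (norm_pos_iff.mpr hv)]
  refine le_csSup ⟨‖r‖, ?_⟩ ⟨v, Set.mem_univ v, hv, rfl⟩
  rintro _ ⟨w, -, -, rfl⟩
  exact apply_div_norm_le_opNorm r w

theorem dualNorm_norm_univ_eq_opNorm (r : Y →L[ℝ] ℝ) :
    dualNorm (fun v : Y => ‖v‖) Set.univ r = ‖r‖ := by
  apply le_antisymm
  · refine Real.sSup_le ?_ (norm_nonneg r)
    rintro _ ⟨v, -, -, rfl⟩
    exact apply_div_norm_le_opNorm r v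
  · rcases subsingleton_or_nontrivial Y with hY | hY
    · rw [Subsingleton.elim r 0, norm_zero]
      exact Real.sSup_nonneg fun _ ⟨v, _, hv, _⟩ => absurd (Subsingleton.elim v 0) hv
    · have habs (v : Y) : ‖r v‖ ≤ dualNorm (fun v : Y => ‖v‖) Set.univ r * ‖v‖ :=
        abs_le'.mpr ⟨apply_le_dualNorm_mul_norm r v, by
          simpa using apply_le_dualNorm_mul_norm r (-v)⟩
      obtain ⟨v, hv⟩ := exists_ne (0 : Y)
      have hnonneg : 0 ≤ dualNorm (fun v : Y => ‖v‖) Set.univ r :=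
        nonneg_of_mul_nonneg_left ((norm_nonneg _).trans (habs v)) (norm_pos_iff.mpr hv)
      exact r.opNorm_le_bound hnonneg habs

end DualNorm

section ImplicitEuler

variable {H : Type*} [SeminormedAddCommGroup H] [InnerProductSpace ℝ H]

theorem norm_sq_sub_norm_sq_le_two_mul_inner_sub (u v : H) :
    ‖v‖ ^ 2 - ‖u‖ ^ 2 ≤ 2 * ⟪v - u, v⟫ := by
  have hpolar : ‖v - u‖ ^ 2 = ‖v‖ ^ 2 - 2 * ⟪u, v⟫ + ‖u‖ ^ 2 := by
    rw [norm_sub_sq_real, real_inner_comm]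
  rw [inner_sub_left, real_inner_self_eq_norm_sq]
  linarith [sq_nonneg ‖v - u‖]

theorem norm_sq_add_le_of_implicitEuler_step {α τ x c : ℝ} (hα : 0 < α) (hτ : 0 ≤ τ) {u v : H}
    (hstep : ⟪v - u, v⟫ + τ * (α * x ^ 2) ≤ τ * (c * x)) :
    ‖v‖ ^ 2 + τ * (α * x ^ 2) ≤ ‖u‖ ^ 2 + τ * (α⁻¹ * c ^ 2) := by
  have hyoung : τ * (2 * x * c) ≤ τ * (α * x ^ 2 + α⁻¹ * c ^ 2) :=
    mul_le_mul_of_nonneg_left (two_mul_le_add_mul_sq hα) hτ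
  linarith [norm_sq_sub_norm_sq_le_two_mul_inner_sub u v]

theorem norm_sq_add_sum_sq_le_of_implicitEuler {α τ : ℝ} (hα : 0 < α) (hτ : 0 ≤ τ)
    {z : ℕ → H} {x c : ℕ → ℝ} {n : ℕ}
    (hstep : ∀ k, 1 ≤ k → k ≤ n →
      ⟪z k - z (k - 1), z k⟫ + τ * (α * x k ^ 2) ≤ τ * (c k * x k)) :
    ‖z n‖ ^ 2 + τ * (α * ∑ k ∈ Icc 1 n, x k ^ 2)
      ≤ ‖z 0‖ ^ 2 + τ * (α⁻¹ * ∑ k ∈ Icc 1 n, c k ^ 2) := by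
  induction n with
  | zero => simp
  | succ n ih =>
    have hprev := ih fun k hk hkn => hstep k hk (hkn.trans n.le_succ)
    have hlast := norm_sq_add_le_of_implicitEuler_step hα hτ (hstep (n + 1) n.succ_pos le_rfl)
    rw [Nat.add_sub_cancel] at hlast
    simp only [sum_Icc_succ_top (Nat.le_add_left 1 n)]
    linarith

end ImplicitEuler

theorem sum_add_mul_sq_le {κ : Type*} (s : Finset κ) (p q : κ → ℝ) (γ : ℝ) :
    ∑ k ∈ s, (p k + γ * q k) ^ 2 ≤ 2 * ∑ k ∈ s, p k ^ 2 + 2 * γ ^ 2 * ∑ k ∈ s, q k ^ 2 := by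
  simp only [mul_sum, ← sum_add_distrib]
  refine sum_le_sum fun k _ => ?_
  linarith [add_sq_le (a := p k) (b := γ * q k), mul_pow γ (q k) 2]

theorem state_error_energy_estimate_with_model_error_general
    {H Y W : Type*} [SeminormedAddCommGroup H] [InnerProductSpace ℝ H]
    [SeminormedAddCommGroup Y] [NormedSpace ℝ Y]
    (ι : Y →ₗ[ℝ] H) (nrmU : W → ℝ) (U : Set W) (a : Y → Y → ℝ)
    {τ : ℝ} (hτ : 0 ≤ τ) (K : ℕ)
    {αLB : ℝ} (hαLB : 0 < αLB) (hcoer : ∀ v : Y, αLB * ‖v‖ ^ 2 ≤ a v v)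
    (b : W → Y → ℝ) (γb : ℝ) (hγb : ∀ w ∈ U, ∀ v : Y, |b w v| ≤ γb * nrmU w * ‖v‖)
    (ey : ℕ → Y) (eu : ℕ → W) (heu : ∀ k, 1 ≤ k → k ≤ K → eu k ∈ U)
    (ry : ℕ → (Y →L[ℝ] ℝ))
    (hstate : ∀ k, 1 ≤ k → k ≤ K → ∀ φ : Y,
      ⟪ι (ey k - ey (k - 1)), ι φ⟫ + τ * a (ey k) φ = τ * ry k φ + τ * b (eu k) φ) :
    τ * ∑ k ∈ Icc 1 K, ‖ey k‖ ^ 2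
      ≤ ‖ι (ey 0)‖ ^ 2 / αLB + 2 * τ / αLB ^ 2 * ∑ k ∈ Icc 1 K, ‖ry k‖ ^ 2
        + 2 * (γb / αLB) ^ 2 * (τ * ∑ k ∈ Icc 1 K, nrmU (eu k) ^ 2) := by
  have htested : ∀ k, 1 ≤ k → k ≤ K →
      ⟪ι (ey k) - ι (ey (k - 1)), ι (ey k)⟫ + τ * (αLB * ‖ey k‖ ^ 2)
        ≤ τ * ((‖ry k‖ + γb * nrmU (eu k)) * ‖ey k‖) := by
    intro k hk hkK
    have hforcing : ry k (ey k) + b (eu k) (ey k) ≤ (‖ry k‖ + γb * nrmU (eu k)) * ‖ey k‖ := by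
      rw [add_mul]
      exact add_le_add ((le_abs_self _).trans ((ry k).le_opNorm (ey k)))
        ((le_abs_self _).trans (hγb (eu k) (heu k hk hkK) (ey k)))
    rw [← map_sub]
    linarith [hstate k hk hkK (ey k), mul_le_mul_of_nonneg_left (hcoer (ey k)) hτ,
      mul_le_mul_of_nonneg_left hforcing hτ]
  have henergy := norm_sq_add_sum_sq_le_of_implicitEuler (z := fun k => ι (ey k)) hαLB hτ htested
  have hsplit := sum_add_mul_sq_le (Icc 1 K) (fun k => ‖ry k‖) (fun k => nrmU (eu k)) γb
  calc τ * ∑ k ∈ Icc 1 K, ‖ey k‖ ^ 2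
      = (τ * (αLB * ∑ k ∈ Icc 1 K, ‖ey k‖ ^ 2)) / αLB := by field_simp
    _ ≤ (‖ι (ey 0)‖ ^ 2 + τ * (αLB⁻¹ * (2 * ∑ k ∈ Icc 1 K, ‖ry k‖ ^ 2
          + 2 * γb ^ 2 * ∑ k ∈ Icc 1 K, nrmU (eu k) ^ 2))) / αLB := by
        gcongr
        refine (le_add_of_nonneg_left (sq_nonneg _)).trans (henergy.trans ?_)
        gcongr
    _ = _ := by field_simp; ring

/-- Spatio-temporal energy estimate for the state error with model-error forcing. -/
theorem state_error_energy_estimate_with_model_error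
    {H Y : Type*} [NormedAddCommGroup H] [InnerProductSpace ℝ H]
    [NormedAddCommGroup Y] [InnerProductSpace ℝ Y] [FiniteDimensional ℝ Y]
    (ι : Y →ₗ[ℝ] H) (hι : Function.Injective ι)
    (U : Submodule ℝ Y)
    (a : Y →ₗ[ℝ] (Y →ₗ[ℝ] ℝ))
    (τ : ℝ) (hτ : 0 < τ) (K : ℕ) (hK : 1 ≤ K)
    (αLB : ℝ) (hαLB : 0 < αLB) (hcoer : ∀ v : Y, αLB * ‖v‖ ^ 2 ≤ a v v)
    (b : Y →ₗ[ℝ] (Y →ₗ[ℝ] ℝ)) (γb : ℝ)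
    (hγb : ∀ w ∈ U, ∀ v : Y, |b w v| ≤ γb * ‖ι w‖ * ‖v‖)
    (ey eu : ℕ → Y) (heu : ∀ k, 1 ≤ k → k ≤ K → eu k ∈ U)
    (ry : ℕ → (Y →ₗ[ℝ] ℝ))
    (hinit : ey 0 = 0)
    (hstate : ∀ k, 1 ≤ k → k ≤ K → ∀ φ : Y,
      ⟪ι (ey k - ey (k - 1)), ι φ⟫ + τ * a (ey k) φ
        = τ * ry k φ + τ * b (eu k) φ) :
    τ * ∑ k ∈ Icc 1 K, ‖ey k‖ ^ 2
      ≤ 2 * τ / αLB ^ 2 * ∑ k ∈ Icc 1 K, (dualNorm (fun v : Y => ‖v‖) Set.univ ⇑(ry k)) ^ 2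
        + 2 * (γb / αLB) ^ 2 * (τ * ∑ k ∈ Icc 1 K, ‖ι (eu k)‖ ^ 2) := by
  have hdual (k : ℕ) : dualNorm (fun v : Y => ‖v‖) Set.univ (ry k)
      = ‖(ry k).toContinuousLinearMap‖ :=
    dualNorm_norm_univ_eq_opNorm (ry k).toContinuousLinearMap
  simpa [hinit, hdual] using state_error_energy_estimate_with_model_error_general ι
    (fun w => ‖ι w‖) U (fun v φ => a v φ) hτ.le K hαLB hcoer (fun w v => b w v) γb hγb ey eu heu
    (fun k => (ry k).toContinuousLinearMap) hstate
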